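/- Consider cliques in Γ_0, i.e. sets of pairwise orthogonal roots. (i) Every maximal clique in Γ_0 has size 8; there are no maximal cliques of smaller size. (ii) There are exactly 3628800 cliques of size 5, exactly 3628800 cliques of size 6, exactly 2073600 cliques of size 7, and exactly 518400 cliques of size 8. (iii) For each n ∈ {5,6,7,8}, the Weyl group W acts transitively on the set of cliques of size n in Γ_0. -/

import Mathlib

noncomputable section

/-- The standard dot product on ℝ^8. -/
def dot (a b : Fin 8 → ℝ) : ℝ := ∑ i, a i * b i

/-- Membership in the E8 lattice Λ: all coordinates are integers or all lie in ℤ + 1/2,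
and the coordinates sum to an even integer. -/
def inLambda (a : Fin 8 → ℝ) : Prop :=
  ((∀ i, ∃ n : ℤ, a i = n) ∨ (∀ i, ∃ n : ℤ, a i = n + 1 / 2)) ∧
    ∃ n : ℤ, (∑ i, a i) = 2 * n

/-- The E8 root system E: lattice vectors of squared norm 2. -/
def isRoot (a : Fin 8 → ℝ) : Prop := inLambda a ∧ dot a a = 2

/-- The Weyl group W: linear isometries of ℝ^8 mapping the root system E onto itself. -/
def IsWeyl (w : (Fin 8 → ℝ) ≃ₗ[ℝ] (Fin 8 → ℝ)) : Prop :=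
  (∀ a b : Fin 8 → ℝ, dot (w a) (w b) = dot a b) ∧
    (⇑w '' {a | isRoot a} = {a | isRoot a})

/-- A clique in the colored graph `Γ_c`: a set of roots whose pairwise dot products
lie in the color set `c`. -/
def IsClique (c : Set ℝ) (K : Finset (Fin 8 → ℝ)) : Prop :=
  (∀ e ∈ K, isRoot e) ∧ ∀ e ∈ K, ∀ f ∈ K, e ≠ f → dot e f ∈ c

/-- A maximal clique in `Γ_c`: a clique not properly contained in another clique. -/
def IsMaxClique (c : Set ℝ) (K : Finset (Fin 8 → ℝ)) : Prop :=
  IsClique c K ∧ ∀ K' : Finset (Fin 8 → ℝ), IsClique c K' → K ⊆ K' → K' = K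

/-!
Fix a frame, that is, eight pairwise orthogonal roots. Two roots `x`, `y` with `x · y = ±1` are
interchanged, up to sign, by the reflection in a root, and this reflection fixes everything
orthogonal to both. Chaining two such moves shows that the stabilizer of the first `n < 3` frame
roots acts transitively on the roots orthogonal to them. The roots orthogonal to three frame roots
form a system of type `A₁ × D₄`, and in `D₄` a root determines the rest of its frame up to signs,
which are corrected by reflections. Hence any clique can be moved into the frame with at most three
prescribed elements going to the first frame roots. This bounds maximal cliques from below, and a
clique of size at least five is normalized through its complement in a frame, which has at most
three elements.

The counts follow by double counting pairs of a clique and a root orthogonal to it.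
-/

open scoped Pointwise

local notation "V" => Fin 8 → ℝ

section IntegerModel

/-- The integer vectors of length `n` with all entries in `A` and sum of squares `m`, built
coordinate by coordinate so that it can be enumerated by kernel computation. -/
def vectorsWithSqNorm (A : Finset ℤ) : ∀ n : ℕ, ℤ → Finset (Fin n → ℤ)
  | 0, m => if m = 0 then {![]} else ∅
  | n + 1, m => ({a ∈ A | a ^ 2 ≤ m}.sigma fun a => vectorsWithSqNorm A n (m - a ^ 2)).map
      ((Equiv.sigmaEquivProd ℤ (Fin n → ℤ)).trans (Fin.consEquiv fun _ => ℤ)).toEmbedding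

theorem mem_vectorsWithSqNorm {A : Finset ℤ} {n : ℕ} {m : ℤ} {x : Fin n → ℤ} :
    x ∈ vectorsWithSqNorm A n m ↔ (∀ i, x i ∈ A) ∧ ∑ i, x i ^ 2 = m := by
  induction n generalizing m with
  | zero => by_cases h : m = 0 <;> simp [vectorsWithSqNorm, h, eq_comm, Subsingleton.elim x ![]]
  | succ n ih =>
    have tail_nonneg : 0 ≤ ∑ i : Fin n, x i.succ ^ 2 := Finset.sum_nonneg fun i _ => sq_nonneg _
    simp only [vectorsWithSqNorm, Finset.mem_map_equiv, Equiv.symm_trans_apply, Finset.mem_sigma,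
      ih, Fin.forall_fin_succ, Fin.sum_univ_succ, Finset.mem_filter, Fin.consEquiv,
      Equiv.coe_fn_symm_mk, Equiv.sigmaEquivProd_symm_apply, Fin.tail]
    grind

theorem disjoint_vectorsWithSqNorm {A B : Finset ℤ} (h : Disjoint A B) (n : ℕ) (m : ℤ) :
    Disjoint (vectorsWithSqNorm A (n + 1) m) (vectorsWithSqNorm B (n + 1) m) :=
  Finset.disjoint_left.2 fun _ hA hB => Finset.disjoint_left.1 h
    ((mem_vectorsWithSqNorm.1 hA).1 0) ((mem_vectorsWithSqNorm.1 hB).1 0)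

/-- The lattice `2Λ`: integer vectors whose coordinates are congruent modulo `2` and sum to a
multiple of `4`. -/
def doubledLattice : AddSubgroup (Fin 8 → ℤ) where
  carrier := {x | (∃ ε, ∀ i, 2 ∣ x i - ε) ∧ 4 ∣ ∑ i, x i}
  zero_mem' := ⟨⟨0, by simp⟩, by simp⟩
  add_mem' := by
    rintro x y ⟨⟨ε, hx⟩, hx4⟩ ⟨⟨δ, hy⟩, hy4⟩
    refine ⟨⟨ε + δ, fun i => ?_⟩, ?_⟩
    · simpa only [Pi.add_apply, add_sub_add_comm] using dvd_add (hx i) (hy i)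
    · simpa only [Pi.add_apply, Finset.sum_add_distrib] using dvd_add hx4 hy4
  neg_mem' := by
    rintro x ⟨⟨ε, hx⟩, hx4⟩
    refine ⟨⟨-ε, fun i => ?_⟩, ?_⟩
    · simpa only [Pi.neg_apply, neg_sub_neg, dvd_sub_comm] using hx i
    · simpa only [Pi.neg_apply, Finset.sum_neg_distrib, dvd_neg] using hx4

theorem four_dvd_dotProduct {x y : Fin 8 → ℤ} (hx : x ∈ doubledLattice)
    (hy : y ∈ doubledLattice) : 4 ∣ x ⬝ᵥ y := by
  obtain ⟨⟨ε, hxε⟩, hx4⟩ := hx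
  obtain ⟨⟨δ, hyδ⟩, hy4⟩ := hy
  have expand : x ⬝ᵥ y =
      ∑ i, (x i - ε) * (y i - δ) + (∑ i, x i) * δ + ε * (∑ i, y i) + 4 * (-2 * ε * δ) := by
    simp only [dotProduct, Fin.sum_univ_eight]
    ring
  rw [expand]
  have shifted : 4 ∣ ∑ i, (x i - ε) * (y i - δ) :=
    Finset.dvd_sum fun i _ => mul_dvd_mul (hxε i) (hyδ i)
  exact (((shifted.add (hx4.mul_right δ)).add (hy4.mul_left ε)).add (dvd_mul_right 4 _))

/-- The vectors of norm `8` in `doubledLattice`: the doubles of the roots. -/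
def doubledRoots : Finset (Fin 8 → ℤ) :=
  {x ∈ (vectorsWithSqNorm {-2, 0, 2} 8 8).disjUnion (vectorsWithSqNorm {-1, 1} 8 8)
    (disjoint_vectorsWithSqNorm (by decide) 7 8) | 4 ∣ ∑ i, x i}

theorem mem_doubledRoots {x : Fin 8 → ℤ} :
    x ∈ doubledRoots ↔ x ∈ doubledLattice ∧ x ⬝ᵥ x = 8 := by
  simp only [doubledRoots, Finset.mem_filter, Finset.mem_disjUnion, mem_vectorsWithSqNorm,
    Finset.mem_insert, Finset.mem_singleton, dotProduct, ← sq]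
  constructor
  · rintro ⟨⟨h, hsq⟩ | ⟨h, hsq⟩, h4⟩
    · exact ⟨⟨⟨0, fun i => by have := h i; lia⟩, h4⟩, hsq⟩
    · exact ⟨⟨⟨1, fun i => by have := h i; lia⟩, h4⟩, hsq⟩
  · rintro ⟨⟨⟨ε, hε⟩, h4⟩, hsq⟩
    have entry_bound : ∀ i, -2 ≤ x i ∧ x i ≤ 2 := fun i => by
      have : x i ^ 2 ≤ 8 := hsq ▸ Finset.single_le_sum (f := fun i => x i ^ 2)
        (fun j _ => sq_nonneg _) (Finset.mem_univ i)
      constructor <;> nlinarith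
    refine ⟨?_, h4⟩
    rcases Int.even_or_odd' ε with ⟨k, rfl | rfl⟩
    · exact Or.inl ⟨fun i => by have := hε i; have := entry_bound i; lia, hsq⟩
    · exact Or.inr ⟨fun i => by have := hε i; have := entry_bound i; omega, hsq⟩

/-- The embedding `x ↦ x / 2` of the integer model into `ℝ⁸`. -/
def halve : (Fin 8 → ℤ) ↪ V where
  toFun x i := x i / 2
  inj' x y h := funext fun i => by simpa using congrFun h i

theorem halve_apply (x : Fin 8 → ℤ) (i : Fin 8) : halve x i = x i / 2 := rfl

theorem halve_neg (x : Fin 8 → ℤ) : halve (-x) = -halve x := by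
  ext i
  simp only [halve_apply, Pi.neg_apply, Int.cast_neg, neg_div]

theorem halve_sub_smul (x y : Fin 8 → ℤ) (k : ℤ) :
    halve (x - k • y) = halve x - (k : ℝ) • halve y := by
  ext i
  simp only [halve_apply, Pi.sub_apply, Pi.smul_apply, smul_eq_mul, Int.cast_sub, Int.cast_mul]
  ring

theorem dot_halve (x y : Fin 8 → ℤ) : dot (halve x) (halve y) = (x ⬝ᵥ y : ℤ) / 4 := by
  simp only [dot, halve_apply, dotProduct, Int.cast_sum, Int.cast_mul, Finset.sum_div]
  exact Finset.sum_congr rfl fun i _ => by ring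

theorem dot_halve_eq_iff {x y : Fin 8 → ℤ} {k : ℤ} :
    dot (halve x) (halve y) = k ↔ x ⬝ᵥ y = 4 * k := by
  rw [dot_halve, div_eq_iff four_ne_zero, mul_comm]
  norm_cast

theorem dot_halve_eq_zero_iff {x y : Fin 8 → ℤ} : dot (halve x) (halve y) = 0 ↔ x ⬝ᵥ y = 0 := by
  exact_mod_cast dot_halve_eq_iff (x := x) (y := y) (k := 0)

theorem inLambda_iff {a : V} : inLambda a ↔ ∃ x ∈ doubledLattice, halve x = a := by
  have sum_halve : ∀ x, ∑ i, halve x i = (∑ i, x i : ℤ) / 2 := fun x => by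
    simp only [halve_apply, Int.cast_sum, Finset.sum_div]
  constructor
  · rintro ⟨h, m, hm⟩
    obtain ⟨x, rfl, ε, hε⟩ : ∃ x, halve x = a ∧ ∃ ε, ∀ i, 2 ∣ x i - ε := by
      rcases h with h | h <;> choose n hn using h
      · exact ⟨fun i => 2 * n i, funext fun i => by simp [halve_apply, hn], 0, by simp⟩
      · exact ⟨fun i => 2 * n i + 1, funext fun i => by simp [halve_apply, hn, add_div], 1, by simp⟩
    refine ⟨x, ⟨⟨ε, hε⟩, m, ?_⟩, rfl⟩
    rw [sum_halve] at hm
    have : ((∑ i, x i : ℤ) : ℝ) = (4 * m : ℤ) := by push_cast at hm ⊢; linarith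
    exact_mod_cast this
  · rintro ⟨x, ⟨⟨ε, hε⟩, m, hm⟩, rfl⟩
    refine ⟨?_, m, by rw [sum_halve, hm]; push_cast; ring⟩
    choose n hn using hε
    have entry : ∀ i, halve x i = n i + ε / 2 := fun i => by
      rw [halve_apply, eq_add_of_sub_eq (hn i)]; push_cast; ring
    rcases Int.even_or_odd' ε with ⟨k, rfl | rfl⟩
    · exact Or.inl fun i => ⟨n i + k, by rw [entry]; push_cast; ring⟩
    · exact Or.inr fun i => ⟨n i + k, by rw [entry]; push_cast; ring⟩

theorem isRoot_iff {a : V} : isRoot a ↔ ∃ x ∈ doubledRoots, halve x = a := by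
  have norm_iff (x : Fin 8 → ℤ) : dot (halve x) (halve x) = 2 ↔ x ⬝ᵥ x = 8 := by
    exact_mod_cast dot_halve_eq_iff (k := 2)
  simp only [isRoot, inLambda_iff, mem_doubledRoots]
  grind

theorem inLambda_sub_smul {a b : V} (ha : inLambda a) (hb : inLambda b) (k : ℤ) :
    inLambda (a - (k : ℝ) • b) := by
  obtain ⟨x, hx, rfl⟩ := inLambda_iff.1 ha
  obtain ⟨y, hy, rfl⟩ := inLambda_iff.1 hb
  exact inLambda_iff.2 ⟨x - k • y, sub_mem hx (zsmul_mem hy k), halve_sub_smul x y k⟩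

theorem exists_int_dot_eq {a b : V} (ha : inLambda a) (hb : inLambda b) :
    ∃ k : ℤ, dot a b = k := by
  obtain ⟨x, hx, rfl⟩ := inLambda_iff.1 ha
  obtain ⟨y, hy, rfl⟩ := inLambda_iff.1 hb
  obtain ⟨k, hk⟩ := four_dvd_dotProduct hx hy
  exact ⟨k, dot_halve_eq_iff.2 hk⟩

/-- The root system `E` as a finset, irreducible lest unification unfold it to the explicit list
of `240` vectors. -/
@[irreducible]
def rootFinset : Finset V := doubledRoots.map halve

theorem mem_rootFinset {a : V} : a ∈ rootFinset ↔ isRoot a := by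
  rw [isRoot_iff, rootFinset, Finset.mem_map]

end IntegerModel

section WeylGroup

theorem dot_eq_dotProduct (a b : V) : dot a b = a ⬝ᵥ b := rfl

theorem dot_comm (a b : V) : dot a b = dot b a := dotProduct_comm a b

theorem dot_neg (a b : V) : dot a (-b) = -dot a b := dotProduct_neg a b

theorem dot_sub_smul (a b c : V) (t : ℝ) : dot a (b - t • c) = dot a b - t * dot a c := by
  simp only [dot_eq_dotProduct, dotProduct_sub, dotProduct_smul, smul_eq_mul]

/-- The Weyl group `W`, acting on `ℝ⁸` by evaluation and on sets of vectors pointwise. -/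
def weylGroup : Subgroup (V ≃ₗ[ℝ] V) where
  carrier := {w | IsWeyl w}
  one_mem' := ⟨fun _ _ => rfl, Set.image_id _⟩
  mul_mem' := fun hv hw => ⟨fun a b => (hv.1 _ _).trans (hw.1 a b),
    Subgroup.mul_mem (MulAction.stabilizer (V ≃ₗ[ℝ] V) {a | isRoot a}) hv.2 hw.2⟩
  inv_mem' := fun {w} hw => ⟨fun a b => by
      rw [← hw.1, ← LinearEquiv.mul_apply, ← LinearEquiv.mul_apply, mul_inv_cancel]; rfl,
    Subgroup.inv_mem (MulAction.stabilizer (V ≃ₗ[ℝ] V) {a | isRoot a}) hw.2⟩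

theorem dot_smul_smul (w : weylGroup) (a b : V) : dot (w • a) (w • b) = dot a b := w.2.1 a b

theorem isRoot_smul_iff (w : weylGroup) {a : V} : isRoot (w • a) ↔ isRoot a := by
  have : w • a ∈ (w : V ≃ₗ[ℝ] V) '' {a | isRoot a} ↔ a ∈ {a | isRoot a} :=
    w.1.injective.mem_set_image
  rwa [w.2.2] at this

/-- The reflection in the hyperplane orthogonal to the root `r`. -/
def rootReflection (r : V) (hr : isRoot r) : weylGroup :=
  ⟨Module.reflection (f := dotProductBilin ℝ ℝ r) hr.2, by
    have isometry : ∀ a b, dot (a - dot r a • r) (b - dot r b • r) = dot a b := fun a b => by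
      rw [dot_sub_smul, dot_comm _ b, dot_comm _ r, dot_sub_smul, dot_sub_smul, hr.2, dot_comm b a,
        dot_comm b r]
      ring
    refine ⟨isometry, (Module.bijOn_reflection_of_mapsTo hr.2 fun a ha => ?_).image_eq⟩
    refine ⟨?_, (isometry a a).trans ha.2⟩
    obtain ⟨k, hk⟩ := exists_int_dot_eq hr.1 ha.1
    have := inLambda_sub_smul ha.1 hr.1 k
    rwa [← hk] at this⟩

theorem rootReflection_smul {r : V} (hr : isRoot r) (a : V) :
    rootReflection r hr • a = a - dot r a • r := rfl

theorem rootReflection_smul_self {r : V} (hr : isRoot r) : rootReflection r hr • r = -r :=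
  Module.reflection_apply_self (f := dotProductBilin ℝ ℝ r) hr.2

theorem rootReflection_smul_of_dot_eq_zero {r a : V} (hr : isRoot r) (h : dot r a = 0) :
    rootReflection r hr • a = a := by
  rw [rootReflection_smul, h, zero_smul, sub_zero]

theorem isRoot.neg {r : V} (hr : isRoot r) : isRoot (-r) := by
  rw [← rootReflection_smul_self hr]
  exact (isRoot_smul_iff _).2 hr

theorem isRoot.sub_of_dot_eq_one {a b : V} (ha : isRoot a) (hb : isRoot b) (h : dot a b = 1) :
    isRoot (a - b) := by
  have reflected : rootReflection b hb • a = a - b := by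
    rw [rootReflection_smul, dot_comm, h, one_smul]
  rw [← reflected]
  exact (isRoot_smul_iff _).2 ha

/-- The roots orthogonal to every element of `K`. -/
def orthRoots (K : Finset V) : Finset V := {x ∈ rootFinset | ∀ e ∈ K, dot x e = 0}

theorem mem_orthRoots {K : Finset V} {x : V} :
    x ∈ orthRoots K ↔ isRoot x ∧ ∀ e ∈ K, dot x e = 0 := by
  rw [orthRoots, Finset.mem_filter, mem_rootFinset]

theorem orthRoots_insert (x : V) (K : Finset V) :
    orthRoots (insert x K) = {y ∈ orthRoots K | dot y x = 0} := by
  ext y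
  rw [Finset.mem_filter, mem_orthRoots, mem_orthRoots, Finset.forall_mem_insert]
  tauto

theorem orthRoots_smul (w : weylGroup) (K : Finset V) : orthRoots (w • K) = w • orthRoots K := by
  ext x
  obtain ⟨x, rfl⟩ := MulAction.surjective w x
  rw [Finset.smul_mem_smul_finset_iff]
  simp only [mem_orthRoots, isRoot_smul_iff,
    Finset.smul_finset_def, Finset.forall_mem_image, dot_smul_smul]

theorem card_orthRoots_smul (w : weylGroup) (K : Finset V) :
    (orthRoots (w • K)).card = (orthRoots K).card := by
  rw [orthRoots_smul, Finset.card_smul_finset]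

theorem neg_mem_orbit_fixingSubgroup {K : Finset V} {x : V} (hx : x ∈ orthRoots K) :
    -x ∈ MulAction.orbit (fixingSubgroup weylGroup (K : Set V)) x := by
  obtain ⟨hx, hxK⟩ := mem_orthRoots.1 hx
  exact ⟨⟨rootReflection x hx, (mem_fixingSubgroup_iff _).2 fun e he =>
    rootReflection_smul_of_dot_eq_zero hx (hxK e he)⟩, rootReflection_smul_self hx⟩

theorem mem_orbit_fixingSubgroup_of_dot_eq_one {K : Finset V} {x y : V} (hx : x ∈ orthRoots K)
    (hy : y ∈ orthRoots K) (h : dot x y = 1) :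
    x ∈ MulAction.orbit (fixingSubgroup weylGroup (K : Set V)) y := by
  obtain ⟨hx, hxK⟩ := mem_orthRoots.1 hx
  obtain ⟨hy, hyK⟩ := mem_orthRoots.1 hy
  have hxy := hx.sub_of_dot_eq_one hy h
  have dot_sub_left : ∀ z, dot (x - y) z = dot x z - dot y z := sub_dotProduct x y
  refine ⟨⟨rootReflection _ hxy, (mem_fixingSubgroup_iff _).2 fun e he =>
    rootReflection_smul_of_dot_eq_zero hxy ?_⟩, ?_⟩
  · rw [dot_sub_left, hxK e he, hyK e he, sub_zero]
  · change rootReflection _ hxy • y = x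
    rw [rootReflection_smul, dot_sub_left, h, hy.2]
    module

theorem mem_orbit_fixingSubgroup_of_abs_dot_eq_one {K : Finset V} {x y : V}
    (hx : x ∈ orthRoots K) (hy : y ∈ orthRoots K) (h : |dot x y| = 1) :
    x ∈ MulAction.orbit (fixingSubgroup weylGroup (K : Set V)) y := by
  rcases (abs_eq zero_le_one).1 h with h | h
  · exact mem_orbit_fixingSubgroup_of_dot_eq_one hx hy h
  · obtain ⟨hy', hyK⟩ := mem_orthRoots.1 hy
    have neg_mem : -y ∈ orthRoots K := mem_orthRoots.2 ⟨hy'.neg, fun e he => by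
      rw [dot_comm, dot_neg, dot_comm, hyK e he, neg_zero]⟩
    rw [← MulAction.orbit_eq_iff.2 (neg_mem_orbit_fixingSubgroup hy)]
    exact mem_orbit_fixingSubgroup_of_dot_eq_one hx neg_mem (by rw [dot_neg, h, neg_neg])

end WeylGroup

section IntegerFrame

/-- The doubles of a frame of `E8`, that is, of eight pairwise orthogonal roots. Indices are read
modulo `8`. The roots orthogonal to the first three form a system of type `A₁ × D₄`, with the fourth
root spanning the factor `A₁`. -/
def doubledFrame (n : ℕ) : Fin 8 → ℤ :=
  ![![2, 2, 0, 0, 0, 0, 0, 0], ![2, -2, 0, 0, 0, 0, 0, 0], ![0, 0, 2, 2, 0, 0, 0, 0],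
    ![0, 0, 2, -2, 0, 0, 0, 0], ![0, 0, 0, 0, 2, 2, 0, 0], ![0, 0, 0, 0, 2, -2, 0, 0],
    ![0, 0, 0, 0, 0, 0, 2, 2], ![0, 0, 0, 0, 0, 0, 2, -2]] (Fin.ofNat 8 n)

/-- The doubles of the roots orthogonal to the frame roots with index in `s`. -/
def doubledOrthRoots (s : Finset ℕ) : Finset (Fin 8 → ℤ) :=
  {x ∈ doubledRoots | ∀ i ∈ s, x ⬝ᵥ doubledFrame i = 0}

set_option maxRecDepth 100000

open Finset (range Ico)

theorem doubledFrame_mem_doubledRoots : ∀ n < 8, doubledFrame n ∈ doubledRoots := by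
  decide +kernel

theorem dotProduct_doubledFrame_eq_zero :
    ∀ m < 8, ∀ n < 8, m ≠ n → doubledFrame m ⬝ᵥ doubledFrame n = 0 := by
  decide +kernel

theorem card_doubledOrthRoots_range_zero : (doubledOrthRoots (range 0)).card = 240 := by
  decide +kernel

theorem card_doubledOrthRoots_range_one : (doubledOrthRoots (range 1)).card = 126 := by
  decide +kernel

theorem card_doubledOrthRoots_range_two : (doubledOrthRoots (range 2)).card = 60 := by
  decide +kernel

theorem card_doubledOrthRoots_Ico :
    ∀ n < 4, (doubledOrthRoots (Ico n 8)).card = 2 * n := by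
  decide +kernel

theorem exists_path_in_doubledOrthRoots_range : ∀ n < 3, ∀ x ∈ doubledOrthRoots (range n),
    ∃ y ∈ doubledOrthRoots (range n), |y ⬝ᵥ doubledFrame n| = 4 ∧ |x ⬝ᵥ y| = 4 := by
  decide +kernel

theorem exists_path_in_doubledOrthRoots_range_three : ∀ x ∈ doubledOrthRoots (range 3),
    (x = doubledFrame 3 ∨ -x = doubledFrame 3) ∨
      ∃ y ∈ doubledOrthRoots (range 3), |y ⬝ᵥ doubledFrame 4| = 4 ∧ |x ⬝ᵥ y| = 4 := by
  decide +kernel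

theorem exists_eq_or_neg_eq_doubledFrame : ∀ x ∈ doubledOrthRoots (insert 4 (range 3)),
    ∃ n < 8, x = doubledFrame n ∨ -x = doubledFrame n := by
  decide +kernel

theorem sum_card_filter_doubledOrthRoots_range_three :
    ∑ x ∈ doubledOrthRoots (range 3), {y ∈ doubledOrthRoots (range 3) | y ⬝ᵥ x = 0}.card = 240 := by
  decide +kernel

end IntegerFrame

section Cliques

variable {c : Set ℝ} {K L : Finset V}

theorem IsClique.subset (hK : IsClique c K) (h : L ⊆ K) : IsClique c L :=
  ⟨fun e he => hK.1 e (h he), fun e he f hf => hK.2 e (h he) f (h hf)⟩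

theorem isClique_smul_iff (w : weylGroup) : IsClique c (w • K) ↔ IsClique c K := by
  simp only [IsClique, Finset.smul_finset_def, Finset.forall_mem_image, isRoot_smul_iff,
    dot_smul_smul, (MulAction.injective w).ne_iff]

theorem isClique_insert_iff {x : V} (hx : x ∉ K) :
    IsClique {0} (insert x K) ↔ IsClique {0} K ∧ x ∈ orthRoots K := by
  simp only [IsClique, mem_orthRoots, Finset.forall_mem_insert, Set.mem_singleton_iff]
  grind [dot_comm]

theorem notMem_of_mem_orthRoots {x : V} (hx : x ∈ orthRoots K) : x ∉ K := fun hxK => by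
  have := (mem_orthRoots.1 hx).1.2
  have := (mem_orthRoots.1 hx).2 x hxK
  linarith

theorem smul_mem_orthRoots_of_mem_fixingSubgroup {w : weylGroup} {x : V}
    (hw : w ∈ fixingSubgroup weylGroup (K : Set V)) (hx : x ∈ orthRoots K) :
    w • x ∈ orthRoots K := by
  obtain ⟨hx, hxK⟩ := mem_orthRoots.1 hx
  refine mem_orthRoots.2 ⟨(isRoot_smul_iff w).2 hx, fun e he => ?_⟩
  rw [← (mem_fixingSubgroup_iff _).1 hw e he, dot_smul_smul, hxK e he]

theorem inv_smul_mem_orthRoots_insert {w : weylGroup} {x y : V}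
    (hw : w ∈ fixingSubgroup weylGroup (K : Set V)) (hy : y ∈ orthRoots K)
    (hyx : dot y (w • x) = 0) : w⁻¹ • y ∈ orthRoots (insert x K) := by
  rw [orthRoots_insert, Finset.mem_filter, ← dot_smul_smul w, smul_inv_smul]
  exact ⟨smul_mem_orthRoots_of_mem_fixingSubgroup (inv_mem hw) hy, hyx⟩

theorem smul_eq_of_mem_fixingSubgroup {w : weylGroup}
    (hw : w ∈ fixingSubgroup weylGroup (K : Set V)) : w • K = K := by
  rw [← MulAction.mem_stabilizer_iff, ← MulAction.stabilizer_coe_finset]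
  exact MulAction.fixingSubgroup_le_stabilizer _ _ hw

theorem IsClique.exists_smul_eq_neg (hK : IsClique {0} K) :
    ∃ w : weylGroup, (∀ x ∈ K, w • x = -x) ∧ ∀ y, (∀ x ∈ K, dot x y = 0) → w • y = y := by
  induction K using Finset.induction_on with
  | empty => exact ⟨1, by simp⟩
  | insert r K hr ih =>
    obtain ⟨hK, hrK⟩ := (isClique_insert_iff hr).1 hK
    obtain ⟨hroot, hrK⟩ := mem_orthRoots.1 hrK
    obtain ⟨w, hneg, hfix⟩ := ih hK
    have fix_r : w • r = r := hfix r fun x hx => dot_comm x r ▸ hrK x hx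
    refine ⟨rootReflection r hroot * w, fun x hx => ?_, fun y hy => ?_⟩
    · rw [mul_smul]
      obtain rfl | hx := Finset.mem_insert.1 hx
      · rw [fix_r, rootReflection_smul_self]
      · rw [hneg x hx, smul_neg, rootReflection_smul_of_dot_eq_zero hroot (hrK x hx)]
    · rw [mul_smul, hfix y fun x hx => hy x (Finset.mem_insert_of_mem hx),
        rootReflection_smul_of_dot_eq_zero hroot (hy r (Finset.mem_insert_self r K))]

end Cliques

section Frame

open Finset (range)

/-- A frame of `E8` together with an ordering; its doubles are given by `doubledFrame`. -/
def frame (n : ℕ) : V := halve (doubledFrame n)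

theorem orthRoots_image_frame (s : Finset ℕ) :
    orthRoots (s.image frame) = (doubledOrthRoots s).map halve := by
  rw [orthRoots, rootFinset, Finset.filter_map, doubledOrthRoots]
  congr 1
  refine Finset.filter_congr fun x _ => ?_
  simp only [Function.comp_apply, Finset.forall_mem_image, frame, dot_halve_eq_zero_iff]

theorem frame_mem_orthRoots {s : Finset ℕ} {n : ℕ} (hs : s ⊆ range 8) (hn : n < 8) (hns : n ∉ s) :
    frame n ∈ orthRoots (s.image frame) := by
  rw [orthRoots_image_frame]
  refine Finset.mem_map_of_mem halve (Finset.mem_filter.2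
    ⟨doubledFrame_mem_doubledRoots n hn, fun i hi => ?_⟩)
  exact dotProduct_doubledFrame_eq_zero n hn i (Finset.mem_range.1 (hs hi)) fun h => hns (h ▸ hi)

theorem frame_notMem_image {s : Finset ℕ} {n : ℕ} (hs : s ⊆ range 8) (hn : n < 8) (hns : n ∉ s) :
    frame n ∉ s.image frame :=
  notMem_of_mem_orthRoots (frame_mem_orthRoots hs hn hns)

theorem isClique_image_frame {s : Finset ℕ} (hs : s ⊆ range 8) :
    IsClique {0} (s.image frame) := by
  induction s using Finset.induction_on with
  | empty => simp [IsClique]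
  | insert n s hns ih =>
    obtain ⟨hn, hs⟩ := Finset.insert_subset_iff.1 hs
    rw [Finset.mem_range] at hn
    rw [Finset.image_insert, isClique_insert_iff (frame_notMem_image hs hn hns)]
    exact ⟨ih hs, frame_mem_orthRoots hs hn hns⟩

theorem injOn_frame : Set.InjOn frame (range 8) := by
  intro m hm n hn h
  by_contra hne
  refine frame_notMem_image (s := {n}) (n := m) (by simpa using hn) (by simpa using hm)
    (by simpa using hne) ?_
  simpa using h

theorem card_image_frame {s : Finset ℕ} (hs : s ⊆ range 8) : (s.image frame).card = s.card :=
  Finset.card_image_of_injOn (injOn_frame.mono hs)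

theorem card_orthRoots_image_frame (s : Finset ℕ) :
    (orthRoots (s.image frame)).card = (doubledOrthRoots s).card := by
  rw [orthRoots_image_frame, Finset.card_map]

end Frame

section Transitivity

open Finset (range Ico)

theorem mem_orbit_frame_of_path {s : Finset ℕ} {n : ℕ} {x y : Fin 8 → ℤ} (hs : s ⊆ range 8)
    (hn : n < 8) (hns : n ∉ s) (hx : x ∈ doubledOrthRoots s) (hy : y ∈ doubledOrthRoots s)
    (hxy : |x ⬝ᵥ y| = 4) (hyn : |y ⬝ᵥ doubledFrame n| = 4) :
    halve x ∈ MulAction.orbit (fixingSubgroup weylGroup (s.image frame : Set V)) (frame n) := by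
  have mem {u} (hu : u ∈ doubledOrthRoots s) : halve u ∈ orthRoots (s.image frame) := by
    rw [orthRoots_image_frame]
    exact Finset.mem_map_of_mem halve hu
  have abs_dot {u v : Fin 8 → ℤ} (h : |u ⬝ᵥ v| = 4) : |dot (halve u) (halve v)| = 1 := by
    rw [dot_halve, abs_div, ← Int.cast_abs, h]
    norm_num
  rw [← MulAction.orbit_eq_iff.2 (mem_orbit_fixingSubgroup_of_abs_dot_eq_one (mem hy)
    (frame_mem_orthRoots hs hn hns) (abs_dot hyn))]
  exact mem_orbit_fixingSubgroup_of_abs_dot_eq_one (mem hx) (mem hy) (abs_dot hxy)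

theorem exists_smul_frame_eq {n : ℕ} (hn : n < 3) {x : V}
    (hx : x ∈ orthRoots ((range n).image frame)) :
    ∃ w ∈ fixingSubgroup weylGroup ((range n).image frame : Set V), w • frame n = x := by
  rw [orthRoots_image_frame, Finset.mem_map] at hx
  obtain ⟨x, hx, rfl⟩ := hx
  obtain ⟨y, hy, hyn, hxy⟩ := exists_path_in_doubledOrthRoots_range n hn x hx
  obtain ⟨w, hw⟩ := mem_orbit_frame_of_path (Finset.range_subset_range.2 (by omega)) (by omega)
    Finset.notMem_range_self hx hy hxy hyn
  exact ⟨w, w.2, hw⟩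

theorem halve_mem_frame_or_neg {x : Fin 8 → ℤ} {n : ℕ} (hn : n < 8)
    (h : x = doubledFrame n ∨ -x = doubledFrame n) :
    halve x ∈ (range 8).image frame ∨ -halve x ∈ (range 8).image frame := by
  rw [← halve_neg]
  exact h.imp (fun h => Finset.mem_image.2 ⟨n, Finset.mem_range.2 hn, congrArg halve h.symm⟩)
    fun h => Finset.mem_image.2 ⟨n, Finset.mem_range.2 hn, congrArg halve h.symm⟩

theorem mem_frame_or_neg_of_mem_orthRoots {x : V}
    (hx : x ∈ orthRoots ((insert 4 (range 3)).image frame)) :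
    x ∈ (range 8).image frame ∨ -x ∈ (range 8).image frame := by
  rw [orthRoots_image_frame, Finset.mem_map] at hx
  obtain ⟨x, hx, rfl⟩ := hx
  obtain ⟨n, hn, h⟩ := exists_eq_or_neg_eq_doubledFrame x hx
  exact halve_mem_frame_or_neg hn h

theorem mem_frame_or_neg_or_exists_smul_frame_four_eq {x : V}
    (hx : x ∈ orthRoots ((range 3).image frame)) :
    (x ∈ (range 8).image frame ∨ -x ∈ (range 8).image frame) ∨
      ∃ w ∈ fixingSubgroup weylGroup ((range 3).image frame : Set V), w • frame 4 = x := by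
  rw [orthRoots_image_frame, Finset.mem_map] at hx
  obtain ⟨x, hx, rfl⟩ := hx
  refine (exists_path_in_doubledOrthRoots_range_three x hx).imp
    (halve_mem_frame_or_neg (by norm_num)) ?_
  rintro ⟨y, hy, hy4, hxy⟩
  obtain ⟨w, hw⟩ := mem_orbit_frame_of_path (Finset.range_subset_range.2 (by norm_num))
    (by norm_num) (by decide) hx hy hxy hy4
  exact ⟨w, w.2, hw⟩

theorem exists_smul_mem_frame_or_neg {M : Finset V} (hM : IsClique {0} M)
    (hM3 : M ⊆ orthRoots ((range 3).image frame)) :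
    ∃ w ∈ fixingSubgroup weylGroup ((range 3).image frame : Set V),
      ∀ x ∈ M, w • x ∈ (range 8).image frame ∨ -(w • x) ∈ (range 8).image frame := by
  by_cases hD4 : ∃ x ∈ M, ∃ w ∈ fixingSubgroup weylGroup ((range 3).image frame : Set V),
      w • frame 4 = x
  · obtain ⟨_, hxM, w, hw, rfl⟩ := hD4
    refine ⟨w⁻¹, inv_mem hw, fun y hy => ?_⟩
    obtain rfl | hne := eq_or_ne y (w • frame 4)
    · rw [inv_smul_smul]
      exact Or.inl (Finset.mem_image_of_mem _ (by decide))
    · refine mem_frame_or_neg_of_mem_orthRoots ?_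
      rw [Finset.image_insert]
      exact inv_smul_mem_orthRoots_insert hw (hM3 hy) (hM.2 y hy _ hxM hne)
  · refine ⟨1, one_mem _, fun x hx => ?_⟩
    rw [one_smul]
    exact (mem_frame_or_neg_or_exists_smul_frame_four_eq (hM3 hx)).resolve_right
      fun h => hD4 ⟨x, hx, h⟩

theorem exists_smul_subset_frame_of_range_three {M : Finset V} (hM : IsClique {0} M)
    (hM3 : M ⊆ orthRoots ((range 3).image frame)) :
    ∃ w ∈ fixingSubgroup weylGroup ((range 3).image frame : Set V),
      w • M ⊆ (range 8).image frame := by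
  classical
  obtain ⟨w, hw, hwM⟩ := exists_smul_mem_frame_or_neg hM hM3
  have hwM_clique : IsClique {0} (w • M) := (isClique_smul_iff w).2 hM
  have hwM3 {y} (hy : y ∈ w • M) : ∀ e ∈ (range 3).image frame, dot y e = 0 := by
    obtain ⟨x, hx, rfl⟩ := Finset.mem_smul_finset.1 hy
    exact (mem_orthRoots.1 (smul_mem_orthRoots_of_mem_fixingSubgroup hw (hM3 hx))).2
  obtain ⟨v, hneg, hfix⟩ := (hwM_clique.subset
    (Finset.filter_subset (· ∉ (range 8).image frame) (w • M))).exists_smul_eq_neg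
  have hv : v ∈ fixingSubgroup weylGroup ((range 3).image frame : Set V) :=
    (mem_fixingSubgroup_iff _).2 fun e he =>
      hfix e fun y hy => hwM3 (Finset.mem_filter.1 hy).1 e he
  refine ⟨v * w, mul_mem hv hw, ?_⟩
  rw [mul_smul]
  intro z hz
  obtain ⟨y, hy, rfl⟩ := Finset.mem_smul_finset.1 hz
  by_cases hyF : y ∈ (range 8).image frame
  · rw [hfix y fun x hx => ?_]
    · exact hyF
    obtain ⟨hx, hxF⟩ := Finset.mem_filter.1 hx
    exact hwM_clique.2 x hx y hy fun h => hxF (h ▸ hyF)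
  · rw [hneg y (Finset.mem_filter.2 ⟨hy, hyF⟩)]
    obtain ⟨x, hx, rfl⟩ := Finset.mem_smul_finset.1 hy
    exact (hwM x hx).resolve_left hyF

theorem exists_smul_subset_frame_of_range {n : ℕ} (hn : n ≤ 3) {M : Finset V}
    (hM : IsClique {0} M) (hMn : M ⊆ orthRoots ((range n).image frame)) :
    ∃ w ∈ fixingSubgroup weylGroup ((range n).image frame : Set V),
      w • M ⊆ (range 8).image frame := by
  induction hn using Nat.decreasingInduction generalizing M with
  | self => exact exists_smul_subset_frame_of_range_three hM hMn
  | of_succ n hn ih =>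
    obtain rfl | ⟨x, hx⟩ := M.eq_empty_or_nonempty
    · exact ⟨1, one_mem _, by simp⟩
    obtain ⟨v, hv, rfl⟩ := exists_smul_frame_eq hn (hMn hx)
    set L := v⁻¹ • M.erase (v • frame n)
    have hL_clique : IsClique {0} L :=
      (isClique_smul_iff _).2 (hM.subset (Finset.erase_subset _ M))
    have hLn : L ⊆ orthRoots ((range (n + 1)).image frame) := by
      intro z hz
      obtain ⟨y, hy, rfl⟩ := Finset.mem_smul_finset.1 hz
      obtain ⟨hne, hy⟩ := Finset.mem_erase.1 hy
      rw [Finset.range_add_one, Finset.image_insert]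
      exact inv_smul_mem_orthRoots_insert hv (hMn hy) (hM.2 y hy _ hx hne)
    obtain ⟨w, hw, hwL⟩ := ih hL_clique hLn
    rw [Finset.range_add_one, Finset.image_insert, Finset.coe_insert, mem_fixingSubgroup_iff,
      Set.forall_mem_insert] at hw
    refine ⟨w * v⁻¹, mul_mem ((mem_fixingSubgroup_iff _).2 hw.2) (inv_mem hv), ?_⟩
    rw [← Finset.insert_erase hx, mul_smul, Finset.smul_finset_insert, Finset.smul_finset_insert,
      inv_smul_smul, hw.1]
    exact Finset.insert_subset (Finset.mem_image_of_mem _ (Finset.mem_range.2 (by omega))) hwL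

theorem exists_smul_eq_image_frame_range {D : Finset V} (hD : IsClique {0} D) (hcard : D.card ≤ 3) :
    ∃ w : weylGroup, w • D = (range D.card).image frame := by
  induction D using Finset.induction_on with
  | empty => exact ⟨1, by simp⟩
  | insert x D hx ih =>
    rw [Finset.card_insert_of_notMem hx] at hcard ⊢
    obtain ⟨hD, hxD⟩ := (isClique_insert_iff hx).1 hD
    obtain ⟨w, hw⟩ := ih hD (by omega)
    have hwx : w • x ∈ orthRoots ((range D.card).image frame) := by
      rw [← hw, orthRoots_smul]
      exact Finset.smul_mem_smul_finset hxD
    obtain ⟨v, hv, hvx⟩ := exists_smul_frame_eq (by omega) hwx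
    refine ⟨v⁻¹ * w, ?_⟩
    rw [mul_smul, Finset.smul_finset_insert, Finset.smul_finset_insert, hw, ← hvx, inv_smul_smul,
      smul_eq_of_mem_fixingSubgroup (inv_mem hv), Finset.range_add_one, Finset.image_insert]

theorem exists_smul_subset_frame {K D : Finset V} (hK : IsClique {0} K) (hDK : D ⊆ K)
    (hcard : D.card ≤ 3) :
    ∃ w : weylGroup, w • D = (range D.card).image frame ∧ w • K ⊆ (range 8).image frame := by
  classical
  obtain ⟨v, hv⟩ := exists_smul_eq_image_frame_range (hK.subset hDK) hcard
  have hvK : IsClique {0} (v • K) := (isClique_smul_iff v).2 hK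
  have rest_orth : v • K \ v • D ⊆ orthRoots ((range D.card).image frame) := by
    intro x hx
    obtain ⟨hxK, hxD⟩ := Finset.mem_sdiff.1 hx
    rw [← hv]
    exact mem_orthRoots.2 ⟨hvK.1 x hxK, fun e he =>
      hvK.2 x hxK e (Finset.smul_finset_subset_smul_finset hDK he) fun h => hxD (h ▸ he)⟩
  obtain ⟨w, hw, hwK⟩ :=
    exists_smul_subset_frame_of_range hcard (hvK.subset Finset.sdiff_subset) rest_orth
  have hwvD : w • v • D = (range D.card).image frame := by
    rw [hv, smul_eq_of_mem_fixingSubgroup hw]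
  refine ⟨w * v, by rw [mul_smul, hwvD], ?_⟩
  rw [mul_smul, ← Finset.sdiff_union_of_subset (Finset.smul_finset_subset_smul_finset hDK),
    Finset.smul_finset_union, hwvD]
  exact Finset.union_subset hwK (Finset.image_subset_image
    (Finset.range_subset_range.2 (by omega)))

theorem IsClique.exists_subset_card_eq_eight {K : Finset V} (hK : IsClique {0} K) :
    ∃ L, K ⊆ L ∧ IsClique {0} L ∧ L.card = 8 := by
  obtain ⟨w, -, hw⟩ := exists_smul_subset_frame hK (Finset.empty_subset K) (by simp)
  refine ⟨w⁻¹ • (range 8).image frame, Finset.subset_smul_finset_iff.2 (by rwa [inv_inv]),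
    (isClique_smul_iff _).2 (isClique_image_frame subset_rfl), ?_⟩
  rw [Finset.card_smul_finset, card_image_frame subset_rfl, Finset.card_range]

theorem IsMaxClique.card_eq_eight {K : Finset V} (hK : IsMaxClique {0} K) : K.card = 8 := by
  obtain ⟨L, hKL, hL, hcard⟩ := hK.1.exists_subset_card_eq_eight
  rwa [hK.2 L hL hKL] at hcard

theorem IsClique.exists_smul_eq_image_frame_Ico {K : Finset V} (hK : IsClique {0} K)
    (hcard : 5 ≤ K.card) : ∃ w : weylGroup, w • K = (Ico (8 - K.card) 8).image frame := by
  classical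
  obtain ⟨L, hKL, hL, hL8⟩ := hK.exists_subset_card_eq_eight
  have hcard_sdiff : (L \ K).card = 8 - K.card := by rw [Finset.card_sdiff_of_subset hKL, hL8]
  obtain ⟨w, hwD, hwL⟩ :=
    exists_smul_subset_frame hL (Finset.sdiff_subset (t := K)) (by omega)
  have hwL : w • L = (range 8).image frame := Finset.eq_of_subset_of_card_le hwL (by
    rw [card_image_frame subset_rfl, Finset.card_smul_finset, hL8, Finset.card_range])
  have Ico_eq : Ico (8 - K.card) 8 = range 8 \ range (8 - K.card) := by
    rw [Finset.range_eq_Ico, Finset.range_eq_Ico, Finset.Ico_sdiff_Ico_left,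
      max_eq_right (Nat.zero_le _)]
  have hwK : w • K = w • L \ w • (L \ K) := by
    rw [← Finset.smul_finset_sdiff, Finset.sdiff_sdiff_eq_self hKL]
  refine ⟨w, ?_⟩
  rw [hwK, hwL, hwD, hcard_sdiff, Ico_eq,
    Finset.image_sdiff_of_injOn injOn_frame (Finset.range_subset_range.2 (by omega))]

theorem IsClique.exists_smul_eq {K L : Finset V} (hK : IsClique {0} K) (hL : IsClique {0} L)
    (hcard : 5 ≤ K.card) (h : K.card = L.card) : ∃ w : weylGroup, w • K = L := by
  obtain ⟨v, hv⟩ := hK.exists_smul_eq_image_frame_Ico hcard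
  obtain ⟨w, hw⟩ := hL.exists_smul_eq_image_frame_Ico (h ▸ hcard)
  exact ⟨w⁻¹ * v, by rw [mul_smul, hv, h, ← hw, inv_smul_smul]⟩

end Transitivity

section Counting

open Finset (range Ico)

open scoped Classical in
/-- The sets of `n` pairwise orthogonal roots. -/
def orthCliques (n : ℕ) : Finset (Finset V) := {K ∈ rootFinset.powersetCard n | IsClique {0} K}

theorem mem_orthCliques {n : ℕ} {K : Finset V} :
    K ∈ orthCliques n ↔ IsClique {0} K ∧ K.card = n := by
  classical
  rw [orthCliques, Finset.mem_filter, Finset.mem_powersetCard]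
  exact ⟨fun h => ⟨h.2, h.1.2⟩, fun h => ⟨⟨fun e he => mem_rootFinset.2 (h.1.1 e he), h.2⟩, h.1⟩⟩

theorem insert_mem_orthCliques {n : ℕ} {K : Finset V} {x : V} (hK : K ∈ orthCliques n)
    (hx : x ∈ orthRoots K) : insert x K ∈ orthCliques (n + 1) := by
  have hxK := notMem_of_mem_orthRoots hx
  rw [mem_orthCliques] at hK ⊢
  rw [isClique_insert_iff hxK, Finset.card_insert_of_notMem hxK, hK.2]
  exact ⟨⟨hK.1, hx⟩, rfl⟩

theorem erase_mem_orthCliques {n : ℕ} {K : Finset V} {x : V} (hK : K ∈ orthCliques (n + 1))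
    (hx : x ∈ K) : K.erase x ∈ orthCliques n ∧ x ∈ orthRoots (K.erase x) := by
  rw [mem_orthCliques] at hK ⊢
  obtain ⟨hclique, hcard⟩ := hK
  rw [← Finset.insert_erase hx, isClique_insert_iff (Finset.notMem_erase x K)] at hclique
  rw [Finset.card_erase_of_mem hx, hcard]
  exact ⟨⟨hclique.1, rfl⟩, hclique.2⟩

theorem sum_orthCliques_sum_orthRoots {m n : ℕ} (hmn : m + 1 = n) (f : Finset V → ℕ) :
    ∑ K ∈ orthCliques m, ∑ x ∈ orthRoots K, f (insert x K) = n * ∑ K ∈ orthCliques n, f K := by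
  subst hmn
  have sum_const : ∀ K ∈ orthCliques (m + 1), ∑ _x ∈ K, f K = (m + 1) * f K := fun K hK => by
    rw [Finset.sum_const, (mem_orthCliques.1 hK).2, smul_eq_mul]
  rw [Finset.mul_sum, ← Finset.sum_congr rfl sum_const, Finset.sum_sigma', Finset.sum_sigma']
  refine Finset.sum_bij' (fun p _ => ⟨insert p.2 p.1, p.2⟩) (fun p _ => ⟨p.1.erase p.2, p.2⟩)
    ?_ ?_ ?_ ?_ fun _ _ => rfl
  · rintro ⟨K, x⟩ h
    obtain ⟨hK, hx⟩ := Finset.mem_sigma.1 h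
    exact Finset.mem_sigma.2 ⟨insert_mem_orthCliques hK hx, Finset.mem_insert_self x K⟩
  · rintro ⟨K, x⟩ h
    obtain ⟨hK, hx⟩ := Finset.mem_sigma.1 h
    exact Finset.mem_sigma.2 (erase_mem_orthCliques hK hx)
  · rintro ⟨K, x⟩ h
    simp only [Finset.erase_insert (notMem_of_mem_orthRoots (Finset.mem_sigma.1 h).2)]
  · rintro ⟨K, x⟩ h
    simp only [Finset.insert_erase (Finset.mem_sigma.1 h).2]

theorem sum_card_orthRoots {m n : ℕ} (hmn : m + 1 = n) :
    ∑ K ∈ orthCliques m, (orthRoots K).card = n * (orthCliques n).card := by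
  simpa only [← Finset.card_eq_sum_ones] using sum_orthCliques_sum_orthRoots hmn fun _ => 1

theorem card_orthCliques_mul {m n d : ℕ} (hmn : m + 1 = n)
    (h : ∀ K ∈ orthCliques m, (orthRoots K).card = d) :
    (orthCliques m).card * d = n * (orthCliques n).card := by
  rw [← sum_card_orthRoots hmn, Finset.sum_const_nat h]

theorem card_orthCliques_zero : (orthCliques 0).card = 1 := by
  rw [Finset.card_eq_one]
  refine ⟨∅, Finset.ext fun K => ?_⟩
  rw [mem_orthCliques, Finset.card_eq_zero, Finset.mem_singleton, and_iff_right_iff_imp]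
  rintro rfl
  simp [IsClique]

theorem IsClique.card_orthRoots_of_le_three {K : Finset V} (hK : IsClique {0} K)
    (hcard : K.card ≤ 3) : (orthRoots K).card = (doubledOrthRoots (range K.card)).card := by
  obtain ⟨w, hw⟩ := exists_smul_eq_image_frame_range hK hcard
  rw [← card_orthRoots_smul w, hw, card_orthRoots_image_frame]

theorem IsClique.card_orthRoots_of_five_le {K : Finset V} (hK : IsClique {0} K)
    (hcard : 5 ≤ K.card) : (orthRoots K).card = 2 * (8 - K.card) := by
  obtain ⟨w, hw⟩ := hK.exists_smul_eq_image_frame_Ico hcard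
  rw [← card_orthRoots_smul w, hw, card_orthRoots_image_frame,
    card_doubledOrthRoots_Ico _ (by omega)]

theorem sum_card_orthRoots_insert_smul (w : weylGroup) (K : Finset V) :
    ∑ x ∈ orthRoots (w • K), (orthRoots (insert x (w • K))).card =
      ∑ x ∈ orthRoots K, (orthRoots (insert x K)).card := by
  rw [orthRoots_smul, Finset.smul_finset_def, Finset.sum_image (MulAction.injective w).injOn]
  refine Finset.sum_congr rfl fun x _ => ?_
  rw [← card_orthRoots_smul w (insert x K), Finset.smul_finset_insert]

theorem sum_card_orthRoots_insert_range_three :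
    ∑ x ∈ orthRoots ((range 3).image frame),
      (orthRoots (insert x ((range 3).image frame))).card = 240 := by
  rw [← sum_card_filter_doubledOrthRoots_range_three]
  simp only [orthRoots_insert]
  rw [orthRoots_image_frame, Finset.sum_map]
  refine Finset.sum_congr rfl fun x _ => ?_
  rw [Finset.filter_map, Finset.card_map]
  simp only [Function.comp_def, dot_halve_eq_zero_iff]

theorem IsClique.sum_card_orthRoots_insert {K : Finset V} (hK : IsClique {0} K)
    (hcard : K.card = 3) : ∑ x ∈ orthRoots K, (orthRoots (insert x K)).card = 240 := by
  obtain ⟨w, hw⟩ := exists_smul_eq_image_frame_range hK hcard.le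
  rw [← sum_card_orthRoots_insert_smul w, hw, hcard, sum_card_orthRoots_insert_range_three]

theorem card_orthCliques_mul_of_le_three {m n d : ℕ} (hm : m ≤ 3) (hmn : m + 1 = n)
    (hd : (doubledOrthRoots (range m)).card = d) :
    (orthCliques m).card * d = n * (orthCliques n).card :=
  card_orthCliques_mul hmn fun K hK => by
    obtain ⟨hclique, rfl⟩ := mem_orthCliques.1 hK
    rw [hclique.card_orthRoots_of_le_three hm, hd]

theorem card_orthCliques_mul_of_five_le {m n : ℕ} (hm : 5 ≤ m) (hmn : m + 1 = n) :
    (orthCliques m).card * (2 * (8 - m)) = n * (orthCliques n).card :=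
  card_orthCliques_mul hmn fun K hK => by
    obtain ⟨hclique, rfl⟩ := mem_orthCliques.1 hK
    exact hclique.card_orthRoots_of_five_le hm

-- The number of roots orthogonal to a 4-clique depends on the clique, so we extend by two roots at
-- once.
theorem card_orthCliques_mul_of_two_step {l m n d : ℕ} (hlm : l + 1 = m) (hmn : m + 1 = n)
    (h : ∀ K ∈ orthCliques l, ∑ x ∈ orthRoots K, (orthRoots (insert x K)).card = d) :
    (orthCliques l).card * d = m * (n * (orthCliques n).card) := by
  rw [← sum_card_orthRoots hmn, ← sum_orthCliques_sum_orthRoots hlm fun K => (orthRoots K).card,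
    Finset.sum_const_nat h]

theorem card_orthCliques_three : (orthCliques 3).card = 302400 := by
  have h0 := card_orthCliques_mul_of_le_three (n := 1) (by norm_num) rfl
    card_doubledOrthRoots_range_zero
  have h1 := card_orthCliques_mul_of_le_three (n := 2) (by norm_num) rfl
    card_doubledOrthRoots_range_one
  have h2 := card_orthCliques_mul_of_le_three (n := 3) (by norm_num) rfl
    card_doubledOrthRoots_range_two
  rw [card_orthCliques_zero] at h0
  omega

theorem card_orthCliques_five : (orthCliques 5).card = 3628800 := by
  have := card_orthCliques_mul_of_two_step (m := 4) (n := 5) rfl rfl fun K hK =>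
    (mem_orthCliques.1 hK).1.sum_card_orthRoots_insert (mem_orthCliques.1 hK).2
  rw [card_orthCliques_three] at this
  omega

theorem card_orthCliques_six : (orthCliques 6).card = 3628800 := by
  have := card_orthCliques_mul_of_five_le (m := 5) (n := 6) le_rfl rfl
  rw [card_orthCliques_five] at this
  omega

theorem card_orthCliques_seven : (orthCliques 7).card = 2073600 := by
  have := card_orthCliques_mul_of_five_le (m := 6) (n := 7) (by norm_num) rfl
  rw [card_orthCliques_six] at this
  omega

theorem card_orthCliques_eight : (orthCliques 8).card = 518400 := by
  have := card_orthCliques_mul_of_five_le (m := 7) (n := 8) (by norm_num) rfl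
  rw [card_orthCliques_seven] at this
  omega

theorem ncard_setOf_isClique (n : ℕ) :
    {K : Finset V | IsClique {0} K ∧ K.card = n}.ncard = (orthCliques n).card := by
  rw [← Set.ncard_coe_finset]
  exact congrArg Set.ncard (Set.ext fun _ => mem_orthCliques.symm)

end Counting

/-- (i) Every maximal clique in `Γ_0` has size 8 (so there are no
maximal cliques of smaller size); (ii) there are exactly 3628800 cliques of size 5,
3628800 of size 6, 2073600 of size 7, and 518400 of size 8 in `Γ_0`; (iii) for each
`n ∈ {5,6,7,8}`, the Weyl group acts transitively on the cliques of size `n` in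
`Γ_0`. -/
theorem stmt_14 :
    (∀ K : Finset (Fin 8 → ℝ), IsMaxClique {0} K → K.card = 8) ∧
    ({K : Finset (Fin 8 → ℝ) | IsClique {0} K ∧ K.card = 5}.ncard = 3628800) ∧
    ({K : Finset (Fin 8 → ℝ) | IsClique {0} K ∧ K.card = 6}.ncard = 3628800) ∧
    ({K : Finset (Fin 8 → ℝ) | IsClique {0} K ∧ K.card = 7}.ncard = 2073600) ∧
    ({K : Finset (Fin 8 → ℝ) | IsClique {0} K ∧ K.card = 8}.ncard = 518400) ∧
    (∀ n ∈ ({5, 6, 7, 8} : Set ℕ), ∀ K1 K2 : Finset (Fin 8 → ℝ),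
      IsClique {0} K1 → K1.card = n → IsClique {0} K2 → K2.card = n →
      ∃ w : (Fin 8 → ℝ) ≃ₗ[ℝ] (Fin 8 → ℝ), IsWeyl w ∧
        ⇑w '' (K1 : Set (Fin 8 → ℝ)) = (K2 : Set (Fin 8 → ℝ))) := by
  refine ⟨fun K hK => hK.card_eq_eight, ?_, ?_, ?_, ?_, fun n hn K L hK hKn hL hLn => ?_⟩
  · rw [ncard_setOf_isClique, card_orthCliques_five]
  · rw [ncard_setOf_isClique, card_orthCliques_six]
  · rw [ncard_setOf_isClique, card_orthCliques_seven]
  · rw [ncard_setOf_isClique, card_orthCliques_eight]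
  · have five_le : 5 ≤ n := by rcases hn with rfl | rfl | rfl | rfl <;> norm_num
    obtain ⟨w, rfl⟩ := hK.exists_smul_eq hL (hKn ▸ five_le) (hKn.trans hLn.symm)
    exact ⟨w, w.2, (Finset.coe_smul_finset w K).symm⟩
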